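/- Let φ ∈ Ξ_p be such that lim_{x→0⁺} √x / φ(x) = 0. Then for every n ∈ ℕ the map Υ_n is continuous from (C₀([0,1], G(ℝ^d)), d_∞) to (C₀([0,1], G(ℝ^d)), d_φ). -/

import Mathlib

/-!
# Continuity of the dyadic interpolation `Υ_n` from `d_∞` to `d_φ`

On each dyadic interval the coordinates of `Υ_n(x)` are polynomials of degree at most two in
the time parameter, whose coefficients are polynomials in the coordinates of `x` at the two
endpoints. Uniform closeness `η` of the coordinates of `x` and `y` therefore makes the
difference of the coordinates of `Υ_n(x)` and `Υ_n(y)` Lipschitz on `[0,1]` with constant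
`O(η)` (`upsilon_fst_diff_lip`, `upsilon_snd_diff_lip`, glued across grid points by `lip_glue`).
Expanding the group law, both levels of `Υ_n(x)_{s,t}⁻¹ ⊗ Υ_n(y)_{s,t}` are `O(η (t - s))`
(`bd_upsilon`).

The homogeneous norm is comparable with `max(|g¹|, √|g²|)`: the lower bound `bd_of_gnorm_le` follows
by induction along products of exponentials, and the upper bound `Bd.gnorm_le` writes
`g = exp(g¹) ⊗ (central part)` and each elementary area as a commutator of exponentials. Hence
the norm of the increment difference is `O(√η √(t - s))`. Since `√h / φ(h)` is bounded on
`(0,1]` (`sqrt_div_bdd`), dividing by `φ(t - s)` leaves a bound `O(√η)`. In the other direction,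
a small `d_∞(x,y)` bounds the coordinates of `x_t⁻¹ ⊗ y_t`, and so those of `y_t - x_t`
(`bd_of_dInf_lt`).
-/

noncomputable section

open scoped BigOperators
open MeasureTheory Filter Matrix

namespace PaperFV

/-- `Vec d` is `ℝ^d`. -/
abbrev Vec (d : ℕ) := Fin d → ℝ

/-- `Mat d` is the space of real `d × d` matrices. -/
abbrev Mat (d : ℕ) := Matrix (Fin d) (Fin d) ℝ

/-- The Euclidean norm on `ℝ^d`. -/
def enorm {d : ℕ} (x : Vec d) : ℝ := Real.sqrt (∑ i, (x i) ^ 2)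

/-- The defining condition of the step-2 free nilpotent group over `ℝ^d`:
the symmetric part of the second component equals `½ g¹ (g¹)ᵀ`. -/
def IsG {d : ℕ} (g : Vec d × Mat d) : Prop :=
  g.2 + g.2ᵀ = Matrix.vecMulVec g.1 g.1

/-- The step-2 free nilpotent group `G(ℝ^d)`. -/
def G (d : ℕ) : Type := { g : Vec d × Mat d // IsG g }

namespace G

variable {d : ℕ}

/-- Group multiplication `g ⊗ h = (g¹ + h¹, g² + g¹ (h¹)ᵀ + h²)`. -/
def mul (g h : G d) : G d :=
  ⟨(g.1.1 + h.1.1, g.1.2 + Matrix.vecMulVec g.1.1 h.1.1 + h.1.2), by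
    have hg := g.2
    have hh := h.2
    simp only [IsG] at *
    ext i j
    have hg' := congrFun (congrFun hg i) j
    have hh' := congrFun (congrFun hh i) j
    simp only [Matrix.add_apply, Matrix.transpose_apply, Matrix.vecMulVec_apply,
      Pi.add_apply] at *
    nlinarith [hg', hh']⟩

/-- The identity element `e = (0, 0)`. -/
def one : G d :=
  ⟨(0, 0), by
    ext i j
    simp [IsG, Matrix.vecMulVec_apply]⟩

/-- The inverse `g⁻¹ = (−g¹, g¹ (g¹)ᵀ − g²)`. -/
def inv (g : G d) : G d :=
  ⟨(-g.1.1, Matrix.vecMulVec g.1.1 g.1.1 - g.1.2), by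
    have hg := g.2
    simp only [IsG] at *
    ext i j
    have hg' := congrFun (congrFun hg i) j
    simp only [Matrix.add_apply, Matrix.sub_apply, Matrix.transpose_apply,
      Matrix.vecMulVec_apply, Pi.neg_apply] at *
    nlinarith [hg']⟩

/-- `exp x = (x, ½ x xᵀ)`. -/
def gexp (x : Vec d) : G d :=
  ⟨(x, (2⁻¹ : ℝ) • Matrix.vecMulVec x x), by
    ext i j
    simp only [IsG, Matrix.add_apply, Matrix.transpose_apply, Matrix.smul_apply,
      Matrix.vecMulVec_apply, smul_eq_mul]
    ring⟩

/-- The dilation `δ_t (g¹, g²) = (t g¹, t² g²)`. -/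
def dil (t : ℝ) (g : G d) : G d :=
  ⟨(t • g.1.1, (t ^ 2) • g.1.2), by
    have hg := g.2
    simp only [IsG] at *
    ext i j
    have hg' := congrFun (congrFun hg i) j
    simp only [Matrix.add_apply, Matrix.transpose_apply, Matrix.smul_apply,
      Matrix.vecMulVec_apply, Pi.smul_apply, smul_eq_mul] at *
    nlinarith [hg']⟩

/-- Product of a list of group elements. -/
def prodL : List (G d) → G d
  | [] => one
  | g :: l => mul g (prodL l)

/-- The homogeneous (Carnot–Carathéodory) norm:
`‖g‖ = inf { Σ |xᵢ| : exp(x₁) ⊗ ⋯ ⊗ exp(xₙ) = g }`. -/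
def gnorm (g : G d) : ℝ :=
  sInf { r | ∃ l : List (Vec d), prodL (l.map gexp) = g ∧ r = (l.map enorm).sum }

/-- The left-invariant distance `d(g, h) = ‖h⁻¹ ⊗ g‖`. -/
def gdist (g h : G d) : ℝ := gnorm (mul (inv h) g)

end G

open G

/-- A continuous `G(ℝ^d)`-valued path on `[0,1]` started at the identity. -/
def IsPath {d : ℕ} (x : ℝ → G d) : Prop :=
  ContinuousOn (fun t => (x t).1) (Set.Icc 0 1) ∧ x 0 = one

/-- The increment `x_{s,t} = x_s⁻¹ ⊗ x_t`. -/
def inc {d : ℕ} (x : ℝ → G d) (s t : ℝ) : G d := mul (inv (x s)) (x t)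

/-- The set of values whose supremum is `d_∞(x,y)`. -/
def dInfSet {d : ℕ} (x y : ℝ → G d) : Set ℝ :=
  { r | ∃ s t : ℝ, 0 ≤ s ∧ s < t ∧ t ≤ 1 ∧
      r = gnorm (mul (inv (inc x s t)) (inc y s t)) }

/-- `d_∞(x,y) = sup_{0 ≤ s < t ≤ 1} ‖x_{s,t}⁻¹ ⊗ y_{s,t}‖`. -/
def dInf {d : ℕ} (x y : ℝ → G d) : ℝ := sSup (dInfSet x y)

/-- The set of values whose supremum is `d_φ(x,y)`. -/
def dPhiSet {d : ℕ} (φ : ℝ → ℝ) (x y : ℝ → G d) : Set ℝ :=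
  { r | ∃ s t : ℝ, 0 ≤ s ∧ s < t ∧ t ≤ 1 ∧
      r = gnorm (mul (inv (inc x s t)) (inc y s t)) / φ (t - s) }

/-- `d_φ(x,y) = sup_{0 ≤ s < t ≤ 1} ‖x_{s,t}⁻¹ ⊗ y_{s,t}‖ / φ(t-s)`. -/
def dPhi {d : ℕ} (φ : ℝ → ℝ) (x y : ℝ → G d) : ℝ := sSup (dPhiSet φ x y)

/-- The set of values whose supremum is `‖x‖_φ`. -/
def normPhiSet {d : ℕ} (φ : ℝ → ℝ) (x : ℝ → G d) : Set ℝ :=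
  { r | ∃ s t : ℝ, 0 ≤ s ∧ s < t ∧ t ≤ 1 ∧ r = gnorm (inc x s t) / φ (t - s) }

/-- `‖x‖_φ = sup_{0 ≤ s < t ≤ 1} ‖x_{s,t}‖ / φ(t-s)`. -/
def normPhi {d : ℕ} (φ : ℝ → ℝ) (x : ℝ → G d) : ℝ := sSup (normPhiSet φ x)

/-- `‖x‖_∞ = sup_{0 ≤ s < t ≤ 1} ‖x_{s,t}‖`. -/
def normInf {d : ℕ} (x : ℝ → G d) : ℝ :=
  sSup { r | ∃ s t : ℝ, 0 ≤ s ∧ s < t ∧ t ≤ 1 ∧ r = gnorm (inc x s t) }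

/-- The class `Ξ_p` of functions `φ : [0,1] → [0,∞)` with `φ(0) = 0` such that
`φ^p` is strictly increasing and convex. -/
def Xi (p : ℝ) (φ : ℝ → ℝ) : Prop :=
  φ 0 = 0 ∧ (∀ x ∈ Set.Icc (0:ℝ) 1, 0 ≤ φ x) ∧
    StrictMonoOn (fun x => φ x ^ p) (Set.Icc (0:ℝ) 1) ∧
    ConvexOn ℝ (Set.Icc (0:ℝ) 1) (fun x => φ x ^ p)

/-- `ζ(x) = (1/(2√2)) ∫₀^x √( log(1 + 1/u²) / u ) du`. -/
def zeta (x : ℝ) : ℝ :=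
  (1 / (2 * Real.sqrt 2)) * ∫ u in (0:ℝ)..x, Real.sqrt (Real.log (1 + 1 / u ^ 2) / u)

/-- The smallest convex function on `[0,1]` dominating `ζ^p`. -/
def convEnv (p : ℝ) (x : ℝ) : ℝ :=
  sInf { y | ∃ g : ℝ → ℝ, ConvexOn ℝ (Set.Icc (0:ℝ) 1) g ∧
    (∀ z ∈ Set.Icc (0:ℝ) 1, zeta z ^ p ≤ g z) ∧ y = g x }

/-- `φ_p`, the `p`-th root of the smallest convex function on `[0,1]` dominating `ζ^p`. -/
def phiP (p : ℝ) (x : ℝ) : ℝ := convEnv p x ^ (1 / p)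

/-- The piecewise "linear" (with dilated increments) dyadic approximation `Υ_n(x)`:
`Υ_n(x)_{k/2ⁿ + t} = x_{k/2ⁿ} ⊗ δ_{2ⁿ t}(x_{k/2ⁿ, (k+1)/2ⁿ})` for `t ∈ [0, 2⁻ⁿ]`. -/
def upsilon {d : ℕ} (n : ℕ) (x : ℝ → G d) : ℝ → G d := fun u =>
  let k : ℤ := ⌊(2 : ℝ) ^ n * u⌋
  mul (x ((k : ℝ) / 2 ^ n))
    (dil ((2 : ℝ) ^ n * u - (k : ℝ)) (inc x ((k : ℝ) / 2 ^ n) (((k : ℝ) + 1) / 2 ^ n)))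


/-! ### Coordinates of the group operations -/

section Coordinates

variable {d : ℕ}

theorem G_ext {g h : G d} (h1 : ∀ i, g.1.1 i = h.1.1 i) (h2 : ∀ i j, g.1.2 i j = h.1.2 i j) :
    g = h :=
  Subtype.ext (Prod.ext (funext h1) (Matrix.ext h2))

theorem mul_fst (g h : G d) (i : Fin d) : (mul g h).1.1 i = g.1.1 i + h.1.1 i := rfl

theorem mul_snd (g h : G d) (i j : Fin d) :
    (mul g h).1.2 i j = g.1.2 i j + g.1.1 i * h.1.1 j + h.1.2 i j := by
  simp [mul, Matrix.vecMulVec_apply]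

theorem inv_fst (g : G d) (i : Fin d) : (inv g).1.1 i = -g.1.1 i := rfl

theorem inv_snd (g : G d) (i j : Fin d) :
    (inv g).1.2 i j = g.1.1 i * g.1.1 j - g.1.2 i j := by
  simp [G.inv, Matrix.vecMulVec_apply]

theorem dil_fst (t : ℝ) (g : G d) (i : Fin d) : (dil t g).1.1 i = t * g.1.1 i := rfl

theorem dil_snd (t : ℝ) (g : G d) (i j : Fin d) : (dil t g).1.2 i j = t ^ 2 * g.1.2 i j := rfl

theorem gexp_fst (x : Vec d) (i : Fin d) : (gexp x).1.1 i = x i := rfl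

theorem gexp_snd (x : Vec d) (i j : Fin d) : (gexp x).1.2 i j = 2⁻¹ * (x i * x j) := by
  simp [gexp, Matrix.vecMulVec_apply]

theorem one_fst (i : Fin d) : (one : G d).1.1 i = 0 := rfl

theorem one_snd (i j : Fin d) : (one : G d).1.2 i j = 0 := rfl

theorem G_symm (g : G d) (i j : Fin d) : g.1.2 i j + g.1.2 j i = g.1.1 i * g.1.1 j := by
  have h := congrFun (congrFun g.2 i) j
  simpa [Matrix.vecMulVec_apply] using h

theorem inc_fst (x : ℝ → G d) (s t : ℝ) (i : Fin d) :
    (inc x s t).1.1 i = (x t).1.1 i - (x s).1.1 i := by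
  rw [inc, mul_fst, inv_fst]; ring

theorem inc_snd (x : ℝ → G d) (s t : ℝ) (i j : Fin d) :
    (inc x s t).1.2 i j = (x t).1.2 i j - (x s).1.2 i j
      - (x s).1.1 i * ((x t).1.1 j - (x s).1.1 j) := by
  rw [inc, mul_snd, inv_fst, inv_snd]; ring

theorem mul_assoc' (a b c : G d) : mul (mul a b) c = mul a (mul b c) := by
  apply G_ext
  · intro i; simp only [mul_fst]; ring
  · intro i j; simp only [mul_fst, mul_snd]; ring

theorem one_mul' (a : G d) : mul one a = a := by
  apply G_ext
  · intro i; simp only [mul_fst, one_fst]; ring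
  · intro i j; simp only [mul_snd, one_fst, one_snd]; ring

theorem prodL_append (l m : List (G d)) : prodL (l ++ m) = mul (prodL l) (prodL m) := by
  induction l with
  | nil => simp [prodL, one_mul']
  | cons a l ih => simp [prodL, ih, mul_assoc']

end Coordinates

/-! ### Comparison of the homogeneous norm with the coordinates -/

section Norm

variable {d : ℕ}

/-- Coordinate control of homogeneous size `r`: first-level entries are at most `r`,
second-level entries at most `r ^ 2`. -/
def Bd (r : ℝ) (g : G d) : Prop :=
  (∀ i, |g.1.1 i| ≤ r) ∧ ∀ i j, |g.1.2 i j| ≤ r ^ 2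

/-- `g` is a finite product of exponentials of total length `r`. -/
def Reach (r : ℝ) (g : G d) : Prop :=
  ∃ l : List (Vec d), prodL (l.map gexp) = g ∧ (l.map enorm).sum = r

theorem enorm_nonneg' (x : Vec d) : 0 ≤ enorm x := Real.sqrt_nonneg _

theorem abs_le_enorm (x : Vec d) (i : Fin d) : |x i| ≤ enorm x := by
  rw [enorm, ← Real.sqrt_sq_eq_abs]
  apply Real.sqrt_le_sqrt
  exact Finset.single_le_sum (f := fun i => x i ^ 2) (fun i _ => sq_nonneg _) (Finset.mem_univ i)

theorem Bd.mul {r s : ℝ} {g h : G d} (hr : 0 ≤ r) (hs : 0 ≤ s) (hg : Bd r g) (hh : Bd s h) :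
    Bd (r + s) (mul g h) := by
  constructor
  · intro i
    rw [mul_fst]
    exact (abs_add_le _ _).trans (add_le_add (hg.1 i) (hh.1 i))
  · intro i j
    rw [mul_snd]
    have h1 : |g.1.1 i * h.1.1 j| ≤ r * s := by
      rw [abs_mul]
      exact mul_le_mul (hg.1 i) (hh.1 j) (abs_nonneg _) hr
    calc _ ≤ |g.1.2 i j| + |g.1.1 i * h.1.1 j| + |h.1.2 i j| := abs_add_three _ _ _
      _ ≤ r ^ 2 + r * s + s ^ 2 := by linarith [hg.2 i j, hh.2 i j]
      _ ≤ (r + s) ^ 2 := by nlinarith [mul_nonneg hr hs]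

theorem Bd.inv {r : ℝ} {g : G d} (hr : 0 ≤ r) (hg : Bd r g) : Bd (2 * r) (inv g) := by
  constructor
  · intro i
    rw [inv_fst, abs_neg]
    linarith [hg.1 i]
  · intro i j
    rw [inv_snd]
    have h1 : |g.1.1 i * g.1.1 j| ≤ r * r := by
      rw [abs_mul]
      exact mul_le_mul (hg.1 i) (hg.1 j) (abs_nonneg _) hr
    have h2 := abs_sub (g.1.1 i * g.1.1 j) (g.1.2 i j)
    nlinarith [hg.2 i j]

theorem bd_gexp (x : Vec d) : Bd (enorm x) (gexp x) := by
  refine ⟨fun i => abs_le_enorm x i, fun i j => ?_⟩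
  rw [gexp_snd, abs_mul, abs_mul]
  have h1 := mul_le_mul (abs_le_enorm x i) (abs_le_enorm x j) (abs_nonneg _) (enorm_nonneg' x)
  rw [abs_of_pos (by norm_num : (0 : ℝ) < 2⁻¹)]
  nlinarith [mul_nonneg (abs_nonneg (x i)) (abs_nonneg (x j))]

theorem sum_enorm_nonneg (l : List (Vec d)) : 0 ≤ (l.map enorm).sum := by
  apply List.sum_nonneg
  intro a ha
  obtain ⟨x, -, rfl⟩ := List.mem_map.1 ha
  exact enorm_nonneg' x

theorem bd_prodL (l : List (Vec d)) : Bd (l.map enorm).sum (prodL (l.map gexp)) := by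
  induction l with
  | nil => simp [Bd, prodL, one_fst, one_snd]
  | cons x l ih =>
    simp only [List.map_cons, List.sum_cons, prodL]
    exact (bd_gexp x).mul (enorm_nonneg' x) (sum_enorm_nonneg l) ih

theorem Reach.mul {r s : ℝ} {g h : G d} (hg : Reach r g) (hh : Reach s h) :
    Reach (r + s) (mul g h) := by
  obtain ⟨l, rfl, rfl⟩ := hg
  obtain ⟨m, rfl, rfl⟩ := hh
  exact ⟨l ++ m, by simp [prodL_append], by simp⟩

theorem reach_one : Reach 0 (one : G d) := ⟨[], rfl, rfl⟩

theorem reach_gexp (x : Vec d) : Reach (enorm x) (gexp x) := by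
  refine ⟨[x], ?_, by simp⟩
  apply G_ext
  · intro i; simp [prodL, mul_fst, one_fst]
  · intro i j; simp [prodL, mul_snd, one_fst, one_snd]

theorem Reach.gnorm_le {r : ℝ} {g : G d} (hg : Reach r g) : gnorm g ≤ r := by
  obtain ⟨l, h1, h2⟩ := hg
  refine csInf_le ⟨0, ?_⟩ ⟨l, h1, h2.symm⟩
  rintro _ ⟨m, -, rfl⟩
  exact sum_enorm_nonneg m

/-- The elementary antisymmetric matrix `c (e_k e_lᵀ - e_l e_kᵀ)`, entrywise. -/
def areaEntry (c : ℝ) (k l i j : Fin d) : ℝ :=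
  c * ((if i = k then 1 else 0) * (if j = l then 1 else 0)
    - (if i = l then 1 else 0) * (if j = k then 1 else 0))

/-- The central element of `G(ℝ^d)` whose second level is
`∑ c_q (e_k e_lᵀ - e_l e_kᵀ)`, the sum ranging over the pairs `q = (k, l) ∈ S`. -/
def area (S : Finset (Fin d × Fin d)) (c : Fin d × Fin d → ℝ) : G d :=
  ⟨(0, Matrix.of fun i j => ∑ q ∈ S, areaEntry (c q) q.1 q.2 i j), by
    ext i j
    simp only [Matrix.add_apply, Matrix.transpose_apply, Matrix.of_apply,
      Matrix.vecMulVec_apply, Pi.zero_apply, mul_zero, ← Finset.sum_add_distrib]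
    apply Finset.sum_eq_zero
    intro q _
    unfold areaEntry
    ring⟩

theorem area_fst (S : Finset (Fin d × Fin d)) (c : Fin d × Fin d → ℝ) (i : Fin d) :
    (area S c).1.1 i = 0 := rfl

theorem area_snd (S : Finset (Fin d × Fin d)) (c : Fin d × Fin d → ℝ) (i j : Fin d) :
    (area S c).1.2 i j = ∑ q ∈ S, areaEntry (c q) q.1 q.2 i j := rfl

theorem enorm_smul_single (a : ℝ) (k : Fin d) :
    enorm (fun i => a * (if i = k then 1 else 0)) = |a| := by
  unfold enorm
  rw [Finset.sum_eq_single k]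
  · simp [Real.sqrt_sq_eq_abs]
  · intro i _ hi; simp [hi]
  · simp

/-- The commutator `exp(a e_k) exp(b e_l) exp(-a e_k) exp(-b e_l)` of total length
`2 (|a| + |b|)` is central with area `a b` in the `(k, l)` plane; `|a| = |b| = √|c|` gives
every area `c` at cost `4 √|c|`. -/
theorem reach_area_single (c : Fin d × Fin d → ℝ) (q : Fin d × Fin d) :
    Reach (4 * √|c q|) (area {q} c) := by
  obtain ⟨a, b, hab, ha, hb⟩ : ∃ a b : ℝ, a * b = c q ∧ |a| = √|c q| ∧ |b| = √|c q| := by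
    rcases le_total 0 (c q) with h | h
    · refine ⟨√|c q|, √|c q|, ?_, abs_of_nonneg (Real.sqrt_nonneg _),
        abs_of_nonneg (Real.sqrt_nonneg _)⟩
      rw [Real.mul_self_sqrt (abs_nonneg _), abs_of_nonneg h]
    · refine ⟨√|c q|, -√|c q|, ?_, abs_of_nonneg (Real.sqrt_nonneg _), by
        rw [abs_neg, abs_of_nonneg (Real.sqrt_nonneg _)]⟩
      rw [mul_neg, Real.mul_self_sqrt (abs_nonneg _), abs_of_nonpos h, neg_neg]
  let u : ℝ → Fin d → Vec d := fun a k i => a * (if i = k then 1 else 0)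
  have h := (((reach_gexp (u a q.1)).mul (reach_gexp (u b q.2))).mul
    (reach_gexp (u (-a) q.1))).mul (reach_gexp (u (-b) q.2))
  have hcost : enorm (u a q.1) + enorm (u b q.2) + enorm (u (-a) q.1) + enorm (u (-b) q.2)
      = 4 * √|c q| := by
    simp only [u, enorm_smul_single, abs_neg, ha, hb]; ring
  rw [hcost] at h
  convert h using 1
  apply G_ext
  · intro i
    simp only [area_fst, mul_fst, gexp_fst, u]; ring
  · intro i j
    simp only [area_snd, mul_fst, mul_snd, gexp_fst, gexp_snd, u, Finset.sum_singleton,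
      areaEntry, ← hab]
    ring

theorem reach_area (S : Finset (Fin d × Fin d)) (c : Fin d × Fin d → ℝ) :
    Reach (∑ q ∈ S, 4 * √|c q|) (area S c) := by
  induction S using Finset.induction_on with
  | empty =>
    rw [Finset.sum_empty]
    convert reach_one (d := d) using 1
    apply G_ext
    · intro i; rfl
    · intro i j; simp [area_snd, one_snd]
  | insert q S hq ih =>
    rw [Finset.sum_insert hq]
    convert (reach_area_single c q).mul ih using 1
    apply G_ext
    · intro i; simp [mul_fst, area_fst]
    · intro i j; simp [mul_snd, area_fst, area_snd, Finset.sum_insert hq]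

/-- Every group element is `exp(g¹)` times a central element carrying its Lévy area. -/
theorem eq_exp_mul_area (g : G d) :
    g = mul (gexp g.1.1)
      (area Finset.univ fun q => 2⁻¹ * (g.1.2 q.1 q.2 - 2⁻¹ * (g.1.1 q.1 * g.1.1 q.2))) := by
  apply G_ext
  · intro i; simp [mul_fst, area_fst, gexp_fst]
  · intro i j
    rw [mul_snd, area_fst, gexp_snd, area_snd, Fintype.sum_prod_type]
    have : ∀ f : Fin d → Fin d → ℝ, ∑ k, ∑ l, areaEntry (f k l) k l i j = f i j - f j i := by
      intro f
      simp [areaEntry, mul_sub, Finset.sum_sub_distrib]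
    rw [this fun k l => 2⁻¹ * (g.1.2 k l - 2⁻¹ * (g.1.1 k * g.1.1 l))]
    linarith [G_symm g i j]

theorem enorm_le {r : ℝ} (hr : 0 ≤ r) {x : Vec d} (hx : ∀ i, |x i| ≤ r) : enorm x ≤ d * r := by
  apply Real.sqrt_le_iff.2 ⟨by positivity, ?_⟩
  calc ∑ i, x i ^ 2 ≤ ∑ _i : Fin d, r ^ 2 :=
        Finset.sum_le_sum fun i _ => sq_le_sq.2 (by rw [abs_of_nonneg hr]; exact hx i)
    _ = d * r ^ 2 := by simp
    _ ≤ (d * r) ^ 2 := by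
        have h1 : (d : ℝ) ≤ (d : ℝ) ^ 2 := by exact_mod_cast Nat.le_self_pow two_ne_zero d
        rw [mul_pow]
        exact mul_le_mul_of_nonneg_right h1 (sq_nonneg r)

/-- The representation of `eq_exp_mul_area`, with its total length bounded coordinatewise. -/
theorem Bd.reach {r : ℝ} (hr : 0 ≤ r) {g : G d} (hg : Bd r g) :
    ∃ s ≤ (d + 4 * d ^ 2) * r, Reach s g := by
  have h := (reach_gexp g.1.1).mul (reach_area Finset.univ
    fun q => 2⁻¹ * (g.1.2 q.1 q.2 - 2⁻¹ * (g.1.1 q.1 * g.1.1 q.2)))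
  rw [← eq_exp_mul_area] at h
  refine ⟨_, ?_, h⟩
  have h1 : ∀ q : Fin d × Fin d,
      4 * √|2⁻¹ * (g.1.2 q.1 q.2 - 2⁻¹ * (g.1.1 q.1 * g.1.1 q.2))| ≤ 4 * r := by
    intro q
    have h2 : |g.1.1 q.1 * g.1.1 q.2| ≤ r * r := by
      rw [abs_mul]
      exact mul_le_mul (hg.1 _) (hg.1 _) (abs_nonneg _) hr
    have h3 : |2⁻¹ * (g.1.2 q.1 q.2 - 2⁻¹ * (g.1.1 q.1 * g.1.1 q.2))| ≤ r ^ 2 := by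
      have h4 := abs_le.1 (hg.2 q.1 q.2)
      have h5 := abs_le.1 h2
      rw [abs_le]
      constructor <;> nlinarith
    have := Real.sqrt_le_iff.2 ⟨hr, h3⟩
    linarith
  calc _ ≤ d * r + ∑ _q : Fin d × Fin d, 4 * r :=
        add_le_add (enorm_le hr hg.1) (Finset.sum_le_sum fun q _ => h1 q)
    _ = _ := by
        simp only [Finset.sum_const, Finset.card_univ, Fintype.card_prod, Fintype.card_fin,
          nsmul_eq_mul, Nat.cast_mul]
        ring

theorem Bd.gnorm_le {r : ℝ} (hr : 0 ≤ r) {g : G d} (hg : Bd r g) :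
    gnorm g ≤ (d + 4 * d ^ 2) * r := by
  obtain ⟨s, hs, h⟩ := hg.reach hr
  exact h.gnorm_le.trans hs

theorem gnorm_nonneg (g : G d) : 0 ≤ gnorm g := by
  apply Real.sInf_nonneg
  rintro _ ⟨l, -, rfl⟩
  exact sum_enorm_nonneg l

/-- Lower bound for the homogeneous norm; the set of lengths is nonempty since every
element is a product of exponentials, so the infimum is not a junk value. -/
theorem bd_of_gnorm_le {r : ℝ} {g : G d} (h : gnorm g ≤ r) : Bd r g := by
  have hne : {s | ∃ l : List (Vec d), prodL (l.map gexp) = g ∧ s = (l.map enorm).sum}.Nonempty := by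
    have h := (reach_gexp g.1.1).mul (reach_area Finset.univ
      fun q => 2⁻¹ * (g.1.2 q.1 q.2 - 2⁻¹ * (g.1.1 q.1 * g.1.1 q.2)))
    rw [← eq_exp_mul_area] at h
    obtain ⟨l, h1, h2⟩ := h
    exact ⟨_, l, h1, h2.symm⟩
  have hr : 0 ≤ r := (gnorm_nonneg g).trans h
  constructor
  · intro i
    refine le_trans (le_csInf hne ?_) h
    rintro _ ⟨l, rfl, rfl⟩
    exact (bd_prodL l).1 i
  · intro i j
    have : √|g.1.2 i j| ≤ r := by
      refine le_trans (le_csInf hne ?_) h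
      rintro _ ⟨l, rfl, rfl⟩
      exact Real.sqrt_le_iff.2 ⟨sum_enorm_nonneg l, (bd_prodL l).2 i j⟩
    exact (Real.sqrt_le_left hr).1 this

end Norm

/-! ### Dyadic interpolation in coordinates -/

section Interpolation

variable {d : ℕ}

/-- A function that is `L`-Lipschitz on each of the `m` consecutive intervals
`[k/N, (k+1)/N]` is `L`-Lipschitz on their union. -/
theorem lip_glue {N L : ℝ} (f : ℝ → ℝ) (m : ℕ)
    (h : ∀ k : ℕ, k < m → ∀ s t : ℝ, (k : ℝ) / N ≤ s → s ≤ t → t ≤ ((k : ℝ) + 1) / N →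
      |f t - f s| ≤ L * (t - s)) :
    ∀ s t : ℝ, 0 ≤ s → s ≤ t → t ≤ (m : ℝ) / N → |f t - f s| ≤ L * (t - s) := by
  induction m with
  | zero =>
    intro s t hs hst ht
    have h0 : t ≤ 0 := by simpa using ht
    have : t = s := by linarith
    simp [this]
  | succ m ih =>
    intro s t hs hst ht
    have ih' := ih fun k hk => h k (Nat.lt_succ_of_lt hk)
    have hlast := h m (Nat.lt_succ_self m)
    push_cast at ht
    rcases le_total t ((m : ℝ) / N) with h1 | h1
    · exact ih' s t hs hst h1
    rcases le_total ((m : ℝ) / N) s with h2 | h2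
    · exact hlast s t h2 hst ht
    · have a := ih' s _ hs h2 le_rfl
      have b := hlast _ t le_rfl h1 ht
      calc |f t - f s| = |(f t - f ((m : ℝ) / N)) + (f ((m : ℝ) / N) - f s)| := by ring_nf
        _ ≤ _ := abs_add_le _ _
        _ ≤ _ := by linarith

/-- On a closed dyadic interval, right endpoint included, `Υ_n(x)` is the interpolation of
the two endpoint values. -/
theorem upsilon_eq (n : ℕ) (x : ℝ → G d) (k : ℕ) (u : ℝ) (h1 : (k : ℝ) / 2 ^ n ≤ u)
    (h2 : u ≤ ((k : ℝ) + 1) / 2 ^ n) :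
    upsilon n x u = mul (x ((k : ℝ) / 2 ^ n))
      (dil (2 ^ n * u - k) (inc x ((k : ℝ) / 2 ^ n) (((k : ℝ) + 1) / 2 ^ n))) := by
  have hN : (0 : ℝ) < 2 ^ n := by positivity
  rw [div_le_iff₀ hN] at h1
  rw [le_div_iff₀ hN] at h2
  rcases h2.lt_or_eq with h | h
  · have hk : ⌊(2 : ℝ) ^ n * u⌋ = (k : ℤ) := by
      rw [Int.floor_eq_iff]
      constructor <;> push_cast <;> linarith
    simp only [upsilon, hk, Int.cast_natCast]
  · -- Here the floor is `k + 1` and the dilation parameter of the next interval vanishes.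
    have hu : (2 : ℝ) ^ n * u = (k : ℝ) + 1 := by linarith
    have hk : ⌊(2 : ℝ) ^ n * u⌋ = (k : ℤ) + 1 := by
      rw [Int.floor_eq_iff]
      constructor <;> push_cast <;> linarith
    simp only [upsilon, hk, Int.cast_add, Int.cast_one, Int.cast_natCast]
    simp only [hu]
    apply G_ext
    · intro i
      simp only [mul_fst, dil_fst, inc_fst]; ring
    · intro i j
      simp only [mul_snd, dil_fst, dil_snd, inc_fst, inc_snd]; ring

theorem upsilon_fst (n : ℕ) (x : ℝ → G d) (k : ℕ) (u : ℝ) (h1 : (k : ℝ) / 2 ^ n ≤ u)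
    (h2 : u ≤ ((k : ℝ) + 1) / 2 ^ n) (i : Fin d) :
    (upsilon n x u).1.1 i = (x (k / 2 ^ n)).1.1 i
      + (2 ^ n * u - k) * ((x ((k + 1) / 2 ^ n)).1.1 i - (x (k / 2 ^ n)).1.1 i) := by
  rw [upsilon_eq n x k u h1 h2, mul_fst, dil_fst, inc_fst]

theorem upsilon_snd (n : ℕ) (x : ℝ → G d) (k : ℕ) (u : ℝ) (h1 : (k : ℝ) / 2 ^ n ≤ u)
    (h2 : u ≤ ((k : ℝ) + 1) / 2 ^ n) (i j : Fin d) :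
    (upsilon n x u).1.2 i j = (x (k / 2 ^ n)).1.2 i j
      + (2 ^ n * u - k) * ((x (k / 2 ^ n)).1.1 i *
        ((x ((k + 1) / 2 ^ n)).1.1 j - (x (k / 2 ^ n)).1.1 j))
      + (2 ^ n * u - k) ^ 2 * ((x ((k + 1) / 2 ^ n)).1.2 i j - (x (k / 2 ^ n)).1.2 i j
        - (x (k / 2 ^ n)).1.1 i *
          ((x ((k + 1) / 2 ^ n)).1.1 j - (x (k / 2 ^ n)).1.1 j)) := by
  rw [upsilon_eq n x k u h1 h2, mul_snd, dil_fst, dil_snd, inc_fst, inc_snd]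
  ring

theorem upsilon_zero (n : ℕ) {x : ℝ → G d} (hx : IsPath x) : upsilon n x 0 = one := by
  rw [upsilon_eq n x 0 0 (by simp) (by positivity)]
  apply G_ext
  · intro i; simp [mul_fst, dil_fst, hx.2, one_fst]
  · intro i j; simp [mul_snd, dil_fst, dil_snd, hx.2, one_fst, one_snd]

/-- The grid points used by `Υ_n` on `[0,1]` lie in `[0,1]`. -/
theorem grid_mem {n k : ℕ} (hk : k < 2 ^ n) :
    ((k : ℝ) / 2 ^ n ∈ Set.Icc (0 : ℝ) 1) ∧ (((k : ℝ) + 1) / 2 ^ n ∈ Set.Icc (0 : ℝ) 1) := by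
  have hN : (0 : ℝ) < 2 ^ n := by positivity
  have h1 : (k : ℝ) + 1 ≤ 2 ^ n := by exact_mod_cast hk
  refine ⟨⟨by positivity, ?_⟩, ⟨by positivity, ?_⟩⟩ <;> rw [div_le_one hN] <;> linarith

/-- Dyadic version of `lip_glue` on `[0,1]`. -/
theorem lip_unit (n : ℕ) {L : ℝ} (f : ℝ → ℝ)
    (h : ∀ k : ℕ, k < 2 ^ n → ∀ s t : ℝ, (k : ℝ) / 2 ^ n ≤ s → s ≤ t →
      t ≤ ((k : ℝ) + 1) / 2 ^ n → |f t - f s| ≤ L * (t - s)) {s t : ℝ}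
    (hs : 0 ≤ s) (hst : s ≤ t) (ht : t ≤ 1) : |f t - f s| ≤ L * (t - s) := by
  refine lip_glue (N := 2 ^ n) f (2 ^ n) h s t hs hst ?_
  push_cast
  rwa [div_self (by positivity)]

theorem upsilon_fst_lip (n : ℕ) {x : ℝ → G d} {K : ℝ}
    (hK : ∀ t ∈ Set.Icc (0 : ℝ) 1, ∀ i, |(x t).1.1 i| ≤ K) (i : Fin d) {s t : ℝ}
    (hs : 0 ≤ s) (hst : s ≤ t) (ht : t ≤ 1) :
    |(upsilon n x t).1.1 i - (upsilon n x s).1.1 i| ≤ 2 * K * 2 ^ n * (t - s) := by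
  refine lip_unit n (fun u => (upsilon n x u).1.1 i) ?_ hs hst ht
  intro k hk s t h1 h2 h3
  simp only [upsilon_fst n x k t (h1.trans h2) h3, upsilon_fst n x k s h1 (h2.trans h3)]
  have a := hK _ (grid_mem hk).1 i
  have b := hK _ (grid_mem hk).2 i
  have hts : 0 ≤ 2 ^ n * (t - s) := mul_nonneg (by positivity) (by linarith)
  generalize (x (k / 2 ^ n)).1.1 i = p at *
  generalize (x ((k + 1) / 2 ^ n)).1.1 i = q at *
  calc _ = |2 ^ n * (t - s) * (q - p)| := by congr 1; ring
    _ = 2 ^ n * (t - s) * |q - p| := by rw [abs_mul, abs_of_nonneg hts]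
    _ ≤ 2 ^ n * (t - s) * (2 * K) := by
        apply mul_le_mul_of_nonneg_left _ hts
        linarith [abs_sub q p]
    _ = _ := by ring

theorem upsilon_fst_diff_lip (n : ℕ) {x y : ℝ → G d} {η : ℝ}
    (hη : ∀ t ∈ Set.Icc (0 : ℝ) 1, ∀ i, |(y t).1.1 i - (x t).1.1 i| ≤ η) (i : Fin d) {s t : ℝ}
    (hs : 0 ≤ s) (hst : s ≤ t) (ht : t ≤ 1) :
    |((upsilon n y t).1.1 i - (upsilon n x t).1.1 i)
      - ((upsilon n y s).1.1 i - (upsilon n x s).1.1 i)| ≤ 2 * η * 2 ^ n * (t - s) := by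
  refine lip_unit n (fun u => (upsilon n y u).1.1 i - (upsilon n x u).1.1 i) ?_ hs hst ht
  intro k hk s t h1 h2 h3
  simp only [upsilon_fst n _ k t (h1.trans h2) h3, upsilon_fst n _ k s h1 (h2.trans h3)]
  have a := hη _ (grid_mem hk).1 i
  have b := hη _ (grid_mem hk).2 i
  have hts : 0 ≤ 2 ^ n * (t - s) := mul_nonneg (by positivity) (by linarith)
  generalize (x (k / 2 ^ n)).1.1 i = p at *
  generalize (x ((k + 1) / 2 ^ n)).1.1 i = q at *
  generalize (y (k / 2 ^ n)).1.1 i = p' at *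
  generalize (y ((k + 1) / 2 ^ n)).1.1 i = q' at *
  calc _ = |2 ^ n * (t - s) * ((q' - q) - (p' - p))| := by congr 1; ring
    _ = 2 ^ n * (t - s) * |(q' - q) - (p' - p)| := by rw [abs_mul, abs_of_nonneg hts]
    _ ≤ 2 ^ n * (t - s) * (2 * η) := by
        apply mul_le_mul_of_nonneg_left _ hts
        linarith [abs_sub (q' - q) (p' - p)]
    _ = _ := by ring

/-- Coordinates of `x` and `y` within `η ≤ 1` of each other give second-level coordinates of
`Υ_n(y)` and `Υ_n(x)` whose difference has Lipschitz constant of order `η`. -/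
theorem upsilon_snd_diff_lip (n : ℕ) {x y : ℝ → G d} {K η : ℝ} (hK1 : 1 ≤ K) (hη1 : η ≤ 1)
    (hK : ∀ t ∈ Set.Icc (0 : ℝ) 1, ∀ i, |(x t).1.1 i| ≤ K)
    (hη : ∀ t ∈ Set.Icc (0 : ℝ) 1, ∀ i, |(y t).1.1 i - (x t).1.1 i| ≤ η)
    (hη2 : ∀ t ∈ Set.Icc (0 : ℝ) 1, ∀ i j, |(y t).1.2 i j - (x t).1.2 i j| ≤ η)
    (i j : Fin d) {s t : ℝ} (hs : 0 ≤ s) (hst : s ≤ t) (ht : t ≤ 1) :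
    |((upsilon n y t).1.2 i j - (upsilon n x t).1.2 i j)
      - ((upsilon n y s).1.2 i j - (upsilon n x s).1.2 i j)| ≤ 22 * K * 2 ^ n * η * (t - s) := by
  refine lip_unit n (fun u => (upsilon n y u).1.2 i j - (upsilon n x u).1.2 i j) ?_ hs hst ht
  intro k hk s t h1 h2 h3
  have hN : (0 : ℝ) < 2 ^ n := by positivity
  simp only [upsilon_snd n _ k t (h1.trans h2) h3, upsilon_snd n _ k s h1 (h2.trans h3)]
  have a1 := hK _ (grid_mem hk).1 j
  have a2 := hK _ (grid_mem hk).2 j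
  have b1 := hη _ (grid_mem hk).1 i
  have b2 := hη _ (grid_mem hk).1 j
  have b3 := hη _ (grid_mem hk).2 j
  have b4 := hη2 _ (grid_mem hk).1 i j
  have b5 := hη2 _ (grid_mem hk).2 i j
  have a3 := hK _ (grid_mem hk).1 i
  have hτ0 : 0 ≤ 2 ^ n * s - k := by rw [div_le_iff₀ hN] at h1; linarith
  have hτ1 : 2 ^ n * t - k ≤ 1 := by rw [le_div_iff₀ hN] at h3; linarith
  have hτ : (2 : ℝ) ^ n * s - k ≤ 2 ^ n * t - k := by
    linarith [mul_le_mul_of_nonneg_left h2 hN.le]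
  have hh : (2 : ℝ) ^ n * (t - s) = (2 ^ n * t - k) - (2 ^ n * s - k) := by ring
  rw [show 22 * K * 2 ^ n * η * (t - s) = 22 * K * η * ((2 : ℝ) ^ n * (t - s)) by ring, hh]
  generalize (2 : ℝ) ^ n * s - k = σ at *
  generalize (2 : ℝ) ^ n * t - k = τ at *
  generalize (x (k / 2 ^ n)).1.1 i = xi at *
  generalize (y (k / 2 ^ n)).1.1 i = yi at *
  generalize (x (k / 2 ^ n)).1.1 j = xj at *
  generalize (y (k / 2 ^ n)).1.1 j = yj at *
  generalize (x ((k + 1) / 2 ^ n)).1.1 j = xj' at *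
  generalize (y ((k + 1) / 2 ^ n)).1.1 j = yj' at *
  generalize (x (k / 2 ^ n)).1.2 i j = X at *
  generalize (y (k / 2 ^ n)).1.2 i j = Y at *
  generalize (x ((k + 1) / 2 ^ n)).1.2 i j = X' at *
  generalize (y ((k + 1) / 2 ^ n)).1.2 i j = Y' at *
  have hη0 : 0 ≤ η := (abs_nonneg _).trans b1
  -- the linear coefficient
  have hB : |yi * (yj' - yj) - xi * (xj' - xj)| ≤ 6 * K * η := by
    have e1 : |(yi - xi) * ((yj' - xj') - (yj - xj) + (xj' - xj))| ≤ η * (2 + 2 * K) := by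
      rw [abs_mul]
      refine mul_le_mul b1 ?_ (abs_nonneg _) hη0
      rw [abs_le] at *
      constructor <;> linarith
    have e2 : |xi * ((yj' - xj') - (yj - xj))| ≤ K * (2 * η) := by
      rw [abs_mul]
      refine mul_le_mul a3 ?_ (abs_nonneg _) (by linarith)
      rw [abs_le] at *
      constructor <;> linarith
    calc _ = |(yi - xi) * ((yj' - xj') - (yj - xj) + (xj' - xj))
          + xi * ((yj' - xj') - (yj - xj))| := by congr 1; ring
      _ ≤ _ := abs_add_le _ _
      _ ≤ _ := by nlinarith [mul_nonneg hη0 (sub_nonneg.2 hK1)]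
  -- the quadratic coefficient
  have hC : |(Y' - Y - yi * (yj' - yj)) - (X' - X - xi * (xj' - xj))| ≤ 8 * K * η := by
    have := mul_nonneg hη0 (sub_nonneg.2 hK1)
    rw [abs_le] at *
    constructor <;> nlinarith
  have hτσ : 0 ≤ τ - σ := sub_nonneg.2 hτ
  calc _ = |(τ - σ) * (yi * (yj' - yj) - xi * (xj' - xj)) + (τ - σ) * (τ + σ)
          * ((Y' - Y - yi * (yj' - yj)) - (X' - X - xi * (xj' - xj)))| := by congr 1; ring
    _ ≤ (τ - σ) * |yi * (yj' - yj) - xi * (xj' - xj)| + (τ - σ) * (τ + σ)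
          * |(Y' - Y - yi * (yj' - yj)) - (X' - X - xi * (xj' - xj))| := by
        refine (abs_add_le _ _).trans_eq ?_
        rw [abs_mul, abs_mul _ ((Y' - Y - yi * (yj' - yj)) - (X' - X - xi * (xj' - xj))),
          abs_of_nonneg hτσ, abs_of_nonneg (mul_nonneg hτσ (by linarith))]
    _ ≤ (τ - σ) * (6 * K * η) + (τ - σ) * 2 * (8 * K * η) := by
        gcongr
        linarith
    _ = _ := by ring

end Interpolation

/-! ### Estimate in `d_φ` -/

section Estimate

variable {d : ℕ}

/-- Coordinates of `Υ_n(x)_{s,t}⁻¹ ⊗ Υ_n(y)_{s,t}`: both levels are `O(η (t - s))`, hence the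
homogeneous size is `O(√η √(t - s))`. -/
theorem bd_upsilon (n : ℕ) {x y : ℝ → G d} (hx : IsPath x) (hy : IsPath y) {K η : ℝ}
    (hK1 : 1 ≤ K) (hη1 : η ≤ 1) (hη0 : 0 ≤ η)
    (hK : ∀ t ∈ Set.Icc (0 : ℝ) 1, ∀ i, |(x t).1.1 i| ≤ K)
    (hη : ∀ t ∈ Set.Icc (0 : ℝ) 1, ∀ i, |(y t).1.1 i - (x t).1.1 i| ≤ η)
    (hη2 : ∀ t ∈ Set.Icc (0 : ℝ) 1, ∀ i j, |(y t).1.2 i j - (x t).1.2 i j| ≤ η)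
    {s t : ℝ} (hs : 0 ≤ s) (hst : s ≤ t) (ht : t ≤ 1) :
    Bd (√(38 * K * (2 ^ n) ^ 2 * η) * √(t - s))
      (mul (inv (inc (upsilon n x) s t)) (inc (upsilon n y) s t)) := by
  have hN : (1 : ℝ) ≤ 2 ^ n := one_le_pow₀ (by norm_num)
  have hh0 : 0 ≤ t - s := by linarith
  have hh1 : t - s ≤ 1 := by linarith
  have hQ : 0 ≤ 38 * K * ((2 : ℝ) ^ n) ^ 2 * η := by positivity
  have hsq : (√(38 * K * (2 ^ n) ^ 2 * η) * √(t - s)) ^ 2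
      = 38 * K * (2 ^ n) ^ 2 * η * (t - s) := by
    rw [mul_pow, Real.sq_sqrt hQ, Real.sq_sqrt hh0]
  have X0 := upsilon_zero n hx
  have Y0 := upsilon_zero n hy
  have dX := fun i => upsilon_fst_lip n hK i hs hst ht
  have dE := fun i => upsilon_fst_diff_lip n hη i hs hst ht
  have bX : ∀ i, |(upsilon n x s).1.1 i| ≤ 2 * K * 2 ^ n := by
    intro i
    have := upsilon_fst_lip n hK i le_rfl hs (hst.trans ht)
    rw [X0, one_fst, sub_zero, sub_zero] at this
    refine this.trans (mul_le_of_le_one_right (by positivity) (hst.trans ht))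
  have bE : ∀ i, |(upsilon n y s).1.1 i - (upsilon n x s).1.1 i| ≤ 2 * η * 2 ^ n := by
    intro i
    have := upsilon_fst_diff_lip n hη i le_rfl hs (hst.trans ht)
    rw [X0, Y0, one_fst, sub_zero, sub_zero, sub_zero] at this
    refine this.trans (mul_le_of_le_one_right (by positivity) (hst.trans ht))
  have dE2 := fun i j => upsilon_snd_diff_lip n hK1 hη1 hK hη hη2 i j hs hst ht
  generalize upsilon n x = X at *
  generalize upsilon n y = Y at *
  generalize (2 : ℝ) ^ n = N at *
  generalize t - s = h at *
  have hηK : η * η ≤ K * η := mul_le_mul_of_nonneg_right (hη1.trans hK1) hη0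
  constructor
  · intro i
    rw [mul_fst, inv_fst, inc_fst, inc_fst]
    apply abs_le_of_sq_le_sq _ (by positivity)
    rw [hsq]
    calc _ = |((Y t).1.1 i - (X t).1.1 i) - ((Y s).1.1 i - (X s).1.1 i)| ^ 2 := by
          rw [sq_abs]; ring
      _ ≤ (2 * η * N * h) ^ 2 := by gcongr; exact dE i
      _ = 4 * (η * η) * N ^ 2 * (h * h) := by ring
      _ ≤ 38 * (K * η) * N ^ 2 * (h * 1) := by gcongr; norm_num
      _ = _ := by ring
  · intro i j
    rw [hsq]
    have m1 : |(X s).1.1 i * (((Y t).1.1 j - (X t).1.1 j) - ((Y s).1.1 j - (X s).1.1 j))|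
        ≤ (2 * K * N) * (2 * η * N * h) := by
      rw [abs_mul]
      exact mul_le_mul (bX i) (dE j) (abs_nonneg _) (by positivity)
    have m2 : |((Y s).1.1 i - (X s).1.1 i) * ((X t).1.1 j - (X s).1.1 j)|
        ≤ (2 * η * N) * (2 * K * N * h) := by
      rw [abs_mul]
      exact mul_le_mul (bE i) (dX j) (abs_nonneg _) (by positivity)
    have m3 : |((Y s).1.1 i - (X s).1.1 i)
          * (((Y t).1.1 j - (X t).1.1 j) - ((Y s).1.1 j - (X s).1.1 j))|
        ≤ (2 * η * N) * (2 * η * N * h) := by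
      rw [abs_mul]
      exact mul_le_mul (bE i) (dE j) (abs_nonneg _) (by positivity)
    have m4 : |((X t).1.1 i - (X s).1.1 i)
          * (((Y t).1.1 j - (X t).1.1 j) - ((Y s).1.1 j - (X s).1.1 j))|
        ≤ (2 * K * N * h) * (2 * η * N * h) := by
      rw [abs_mul]
      exact mul_le_mul (dX i) (dE j) (abs_nonneg _) (by positivity)
    have c0 : 22 * K * N * η * h ≤ 22 * (K * η) * N ^ 2 * h := by
      have : N ≤ N ^ 2 := by nlinarith
      calc 22 * K * N * η * h = 22 * (K * η) * N * h := by ring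
        _ ≤ _ := by gcongr
    have c3 : (2 * η * N) * (2 * η * N * h) ≤ 4 * (K * η) * N ^ 2 * h := by
      calc (2 * η * N) * (2 * η * N * h) = 4 * (η * η) * N ^ 2 * h := by ring
        _ ≤ _ := by gcongr
    have c4 : (2 * K * N * h) * (2 * η * N * h) ≤ 4 * (K * η) * N ^ 2 * h := by
      calc (2 * K * N * h) * (2 * η * N * h) = 4 * (K * η) * N ^ 2 * (h * h) := by ring
        _ ≤ 4 * (K * η) * N ^ 2 * (h * 1) := by gcongr
        _ = _ := by ring
    have m0 := dE2 i j
    simp only [mul_snd, inv_fst, inv_snd, inc_fst, inc_snd]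
    rw [abs_le] at *
    constructor <;> linarith

/-- The coordinates of a path are bounded. -/
theorem exists_bound {x : ℝ → G d} (hx : IsPath x) :
    ∃ K : ℝ, 1 ≤ K ∧ ∀ t ∈ Set.Icc (0 : ℝ) 1, Bd K (x t) := by
  have hc : ContinuousOn (fun t => ∑ i, |(x t).1.1 i| + ∑ i, ∑ j, |(x t).1.2 i j|)
      (Set.Icc 0 1) := by
    have h1 : ContinuousOn (fun t => (x t).1.1) (Set.Icc 0 1) := continuous_fst.comp_continuousOn hx.1
    have h2 : ContinuousOn (fun t => (x t).1.2) (Set.Icc 0 1) := continuous_snd.comp_continuousOn hx.1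
    refine ContinuousOn.add (continuousOn_finsetSum _ fun i _ => ?_)
      (continuousOn_finsetSum _ fun i _ => continuousOn_finsetSum _ fun j _ => ?_)
    · exact ((continuous_apply i).comp_continuousOn h1).abs
    · exact (((continuous_apply j).comp (continuous_apply i)).comp_continuousOn h2).abs
  obtain ⟨M, hM⟩ := isCompact_Icc.bddAbove_image hc
  have hM' : ∀ t ∈ Set.Icc (0 : ℝ) 1,
      ∑ i, |(x t).1.1 i| + ∑ i, ∑ j, |(x t).1.2 i j| ≤ M :=
    fun t ht => hM (Set.mem_image_of_mem _ ht)
  refine ⟨max 1 M, le_max_left _ _, fun t ht => ⟨fun i => ?_, fun i j => ?_⟩⟩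
  · have h1 := Finset.single_le_sum (f := fun i => |(x t).1.1 i|) (fun i _ => abs_nonneg _)
      (Finset.mem_univ i)
    have h2 : 0 ≤ ∑ i, ∑ j, |(x t).1.2 i j| := by positivity
    exact le_max_of_le_right (by linarith [hM' t ht])
  · have h1 := Finset.single_le_sum (f := fun j => |(x t).1.2 i j|) (fun i _ => abs_nonneg _)
      (Finset.mem_univ j)
    have h2 := Finset.single_le_sum (f := fun i => ∑ j, |(x t).1.2 i j|)
      (fun i _ => by positivity) (Finset.mem_univ i)
    have h3 : 0 ≤ ∑ i, |(x t).1.1 i| := by positivity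
    have h4 : |(x t).1.2 i j| ≤ max 1 M := le_max_of_le_right (by linarith [hM' t ht])
    nlinarith [le_max_left 1 M]

/-- Finiteness of the supremum defining `d_∞`, so that `dInf` is a genuine upper bound. -/
theorem bddAbove_dInfSet {x y : ℝ → G d} (hx : IsPath x) (hy : IsPath y) :
    BddAbove (dInfSet x y) := by
  obtain ⟨K, hK1, hK⟩ := exists_bound hx
  obtain ⟨K', hK1', hK'⟩ := exists_bound hy
  refine ⟨(d + 4 * d ^ 2) * (2 * (2 * K + K) + (2 * K' + K')), ?_⟩
  rintro _ ⟨s, t, hs, hst, ht, rfl⟩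
  have hs' : s ∈ Set.Icc (0 : ℝ) 1 := ⟨hs, by linarith⟩
  have ht' : t ∈ Set.Icc (0 : ℝ) 1 := ⟨by linarith, ht⟩
  have k0 : 0 ≤ K := by linarith
  have k0' : 0 ≤ K' := by linarith
  have a : Bd (2 * K + K) (inc x s t) := ((hK s hs').inv k0).mul (by positivity) k0 (hK t ht')
  have b : Bd (2 * K' + K') (inc y s t) :=
    ((hK' s hs').inv k0').mul (by positivity) k0' (hK' t ht')
  exact ((a.inv (by positivity)).mul (by positivity) (by positivity) b).gnorm_le (by positivity)

theorem inc_zero {x : ℝ → G d} (hx : IsPath x) (t : ℝ) : inc x 0 t = x t := by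
  apply G_ext
  · intro i; rw [inc_fst, hx.2, one_fst, sub_zero]
  · intro i j; rw [inc_snd, hx.2, one_fst, one_snd]; ring

theorem bd_of_dInf_lt {x y : ℝ → G d} (hx : IsPath x) (hy : IsPath y) {δ : ℝ} (hδ : 0 ≤ δ)
    (h : dInf x y < δ) {t : ℝ} (ht : t ∈ Set.Icc (0 : ℝ) 1) : Bd δ (mul (inv (x t)) (y t)) := by
  rcases ht.1.eq_or_lt with h0 | h0
  · subst h0
    rw [hx.2, hy.2]
    refine ⟨fun i => ?_, fun i j => ?_⟩
    · simpa [mul_fst, inv_fst, one_fst] using hδ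
    · simpa [mul_snd, inv_fst, inv_snd, one_fst, one_snd] using sq_nonneg δ
  · apply bd_of_gnorm_le
    have := le_csSup (bddAbove_dInfSet hx hy) ⟨0, t, le_rfl, h0, ht.2, rfl⟩
    rw [inc_zero hx, inc_zero hy] at this
    exact this.trans h.le

theorem Xi.pos {p : ℝ} {φ : ℝ → ℝ} (hφ : Xi p φ) {h : ℝ} (h0 : 0 < h) (h1 : h ≤ 1) :
    0 < φ h := by
  have h2 := hφ.2.2.1 (Set.left_mem_Icc.2 zero_le_one) ⟨h0.le, h1⟩ h0
  refine lt_of_le_of_ne (hφ.2.1 h ⟨h0.le, h1⟩) fun he => ?_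
  simp [hφ.1, ← he] at h2

theorem Xi.mono {p : ℝ} (hp : 0 < p) {φ : ℝ → ℝ} (hφ : Xi p φ) {a b : ℝ} (h0 : 0 ≤ a)
    (hab : a ≤ b) (h1 : b ≤ 1) : φ a ≤ φ b := by
  have ha : a ∈ Set.Icc (0 : ℝ) 1 := ⟨h0, hab.trans h1⟩
  have hb : b ∈ Set.Icc (0 : ℝ) 1 := ⟨h0.trans hab, h1⟩
  have := hφ.2.2.1.monotoneOn ha hb hab
  exact (Real.rpow_le_rpow_iff (hφ.2.1 a ha) (hφ.2.1 b hb) hp).1 this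

/-- `√h / φ(h)` is bounded on `(0,1]`: near `0` by the limit hypothesis, elsewhere because
`φ` is increasing and positive. -/
theorem sqrt_div_bdd {p : ℝ} (hp : 0 < p) {φ : ℝ → ℝ} (hφ : Xi p φ)
    (hlim : Tendsto (fun x => Real.sqrt x / φ x) (nhdsWithin 0 (Set.Ioi 0)) (nhds 0)) :
    ∃ B : ℝ, 0 < B ∧ ∀ h : ℝ, 0 < h → h ≤ 1 → √h / φ h ≤ B := by
  have h1 := hlim.eventually (gt_mem_nhds (zero_lt_one (α := ℝ)))
  obtain ⟨r, hr, hr'⟩ := mem_nhdsGT_iff_exists_Ioo_subset.1 h1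
  have hr : 0 < r := hr
  have hm : 0 < min r 1 := lt_min hr one_pos
  have hφm := hφ.pos hm (min_le_right _ _)
  refine ⟨max 1 (1 / φ (min r 1)), by positivity, fun h h0 hh1 => ?_⟩
  by_cases hc : h < min r 1
  · exact le_max_of_le_left (le_of_lt (hr' ⟨h0, hc.trans_le (min_le_left _ _)⟩))
  · apply le_max_of_le_right
    have := hφ.mono hp hm.le (not_lt.1 hc) hh1
    have hs : √h ≤ 1 := Real.sqrt_le_one.2 hh1
    exact div_le_div₀ zero_le_one hs hφm this

end Estimate

/-- If `√x = o(φ(x))` at `0⁺`, then each `Υ_n` is continuous from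
`(C₀([0,1], G(ℝ^d)), d_∞)` to `(C₀([0,1], G(ℝ^d)), d_φ)`. -/
theorem upsilon_continuous (d : ℕ) (hd : 2 ≤ d) (p : ℝ) (hp : 2 < p ∧ p < 3)
    (φ : ℝ → ℝ) (hφ : Xi p φ)
    (hlim : Tendsto (fun x => Real.sqrt x / φ x) (nhdsWithin 0 (Set.Ioi 0)) (nhds 0))
    (n : ℕ) :
    ∀ x : ℝ → G d, IsPath x → ∀ ε : ℝ, 0 < ε → ∃ δ : ℝ, 0 < δ ∧
      ∀ y : ℝ → G d, IsPath y → dInf x y < δ →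
        dPhi φ (upsilon n x) (upsilon n y) < ε := by
  intro x hx ε hε
  have hp0 : 0 < p := by linarith [hp.1]
  obtain ⟨B, hB, hBφ⟩ := sqrt_div_bdd hp0 hφ hlim
  obtain ⟨K, hK1, hK⟩ := exists_bound hx
  have hK0 : 0 < K := by linarith
  have hd0 : (0 : ℝ) < d := by exact_mod_cast (by omega : 0 < d)
  -- `η` is chosen so that `(d + 4 d²) √(38 K 4ⁿ η) B ≤ ε / 2`.
  set e : ℝ := ε / 2 / ((d + 4 * d ^ 2) * B) with he
  have he0 : 0 < e := by positivity
  set η : ℝ := min 1 (e ^ 2 / (38 * K * (2 ^ n) ^ 2)) with hηdef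
  have hη0 : 0 < η := lt_min one_pos (by positivity)
  have hη1 : η ≤ 1 := min_le_left _ _
  have hηe : √(38 * K * (2 ^ n) ^ 2 * η) ≤ e := by
    rw [Real.sqrt_le_left he0.le, mul_comm]
    exact (le_div_iff₀ (by positivity)).1 (min_le_right _ _)
  -- `δ² + K δ ≤ 2 K δ = η` controls the second-level coordinates.
  refine ⟨η / (2 * K), by positivity, fun y hy hxy => ?_⟩
  set δ : ℝ := η / (2 * K) with hδ
  have hδ0 : 0 < δ := by positivity
  have hδη : 2 * K * δ = η := by rw [hδ]; field_simp
  have hD := fun t ht => bd_of_dInf_lt hx hy hδ0.le hxy (t := t) ht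
  have hKδ : δ ≤ K * δ := le_mul_of_one_le_left hδ0.le hK1
  have hδ1 : δ ≤ 1 := by linarith
  have h1 : ∀ t ∈ Set.Icc (0 : ℝ) 1, ∀ i, |(y t).1.1 i - (x t).1.1 i| ≤ δ := by
    intro t ht i
    have := (hD t ht).1 i
    rwa [mul_fst, inv_fst, neg_add_eq_sub] at this
  have h2 : ∀ t ∈ Set.Icc (0 : ℝ) 1, ∀ i j, |(y t).1.2 i j - (x t).1.2 i j| ≤ η := by
    intro t ht i j
    have a := (hD t ht).2 i j
    rw [mul_snd, inv_fst, inv_snd] at a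
    have b : |(x t).1.1 i * ((y t).1.1 j - (x t).1.1 j)| ≤ K * δ := by
      rw [abs_mul]
      exact mul_le_mul ((hK t ht).1 i) (h1 t ht j) (abs_nonneg _) hK0.le
    have c : δ ^ 2 ≤ K * δ := by nlinarith
    rw [abs_le] at *
    constructor <;> linarith
  have h1' : ∀ t ∈ Set.Icc (0 : ℝ) 1, ∀ i, |(y t).1.1 i - (x t).1.1 i| ≤ η :=
    fun t ht i => (h1 t ht i).trans (by linarith)
  refine lt_of_le_of_lt (Real.sSup_le ?_ (half_pos hε).le) (half_lt_self hε)
  rintro _ ⟨s, t, hs, hst, ht, rfl⟩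
  have hts : 0 < t - s := by linarith
  have hts1 : t - s ≤ 1 := by linarith
  have hφ0 := hφ.pos hts hts1
  have hb := (bd_upsilon n hx hy hK1 hη1 hη0.le (fun t ht => (hK t ht).1) h1' h2
    hs hst.le ht).gnorm_le (by positivity)
  calc _ ≤ (d + 4 * d ^ 2) * (√(38 * K * (2 ^ n) ^ 2 * η) * √(t - s)) / φ (t - s) := by gcongr
    _ = (d + 4 * d ^ 2) * √(38 * K * (2 ^ n) ^ 2 * η) * (√(t - s) / φ (t - s)) := by ring
    _ ≤ (d + 4 * d ^ 2) * e * B := by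
        have := hBφ _ hts hts1
        gcongr
    _ = ε / 2 := by rw [he]; field_simp

end PaperFV
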